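/- Let n ≥ 1, let d ∈ ℝ^n satisfy d ≥ 0 entrywise and d ≠ 0, and let x, y ∈ ℝ^n with ∑_i x_i = ∑_i y_i. Then th_{d,x}(c) ≤ th_{d,y}(c) for all c ∈ [0, ∑_i d_i] if and only if ‖x − t·d‖₁ ≤ ‖y − t·d‖₁ for all t ∈ ℝ, where ‖·‖₁ is the vector 1-norm. -/

import Mathlib

open Finset

noncomputable def th {n : ℕ} (d y : Fin n → ℝ) (c : ℝ) : ℝ :=
  sInf ((fun i => (∑ j, max (y j - y i / d i * d j) 0) + y i / d i * c) ''
    {i : Fin n | 0 < d i})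

noncomputable def psum {n : ℕ} (d : Fin n → ℝ) (σ : Equiv.Perm (Fin n)) (j : ℕ) : ℝ :=
  ∑ i ∈ Finset.univ.filter (fun i : Fin n => (i : ℕ) < j), d (σ i)

noncomputable def Emap {n : ℕ} (d y : Fin n → ℝ) (σ : Equiv.Perm (Fin n)) : Fin n → ℝ :=
  fun k => th d y (psum d σ ((σ.symm k : ℕ) + 1)) - th d y (psum d σ (σ.symm k : ℕ))

def dStoch {n : ℕ} (d : Fin n → ℝ) (A : Matrix (Fin n) (Fin n) ℝ) : Prop :=
  (∀ i j, 0 ≤ A i j) ∧ (∀ j, ∑ i, A i j = 1) ∧ A.mulVec d = d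

def Mset {n : ℕ} (d y : Fin n → ℝ) : Set (Fin n → ℝ) :=
  {x | ∃ A : Matrix (Fin n) (Fin n) ℝ, dStoch d A ∧ A.mulVec y = x}

noncomputable def Aentry {n : ℕ} (d : Fin n → ℝ) (σ τ : Equiv.Perm (Fin n))
    (α : ℕ → Fin n) (j k : Fin n) : ℝ :=
  if k = α j.val ∧ (α j.val).val < (α (j.val + 1)).val then
    (psum d τ ((α j.val).val + 1) - psum d σ j.val) / d (τ (α j.val))
  else if (α j.val).val < k.val ∧ k.val < (α (j.val + 1)).val then 1
  else if (α j.val).val < (α (j.val + 1)).val ∧ k = α (j.val + 1) then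
    (psum d σ (j.val + 1) - psum d τ (α (j.val + 1)).val) / d (τ (α (j.val + 1)))
  else if α j.val = α (j.val + 1) ∧ k = α (j.val + 1) then
    d (σ j) / d (τ (α (j.val + 1)))
  else 0

noncomputable def Amat {n : ℕ} (d : Fin n → ℝ) (σ τ : Equiv.Perm (Fin n))
    (α : ℕ → Fin n) : Matrix (Fin n) (Fin n) ℝ :=
  Matrix.of fun p q => Aentry d σ τ α (σ.symm p) (τ.symm q)

/-!
The convex function `H(t) = ∑ j, (y j - t * d j)⁺` determines `‖y - t d‖₁ = 2 H(t) - ∑ y + t ∑ d`,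
so for vectors of equal sum the 1-norm condition is pointwise domination of these functions.
A weighted quantile argument shows that `t ↦ H(t) + t c` attains its minimum over `ℝ` at one of the
points `y i / d i` with `0 < d i`; hence `th d y` is the Legendre conjugate of `H`. Conjugation
preserves domination, and so does its inverse, because each `t` minimizes `s ↦ H(s) + s c` for the
slope `c = ∑_{t d j < y j} d j ∈ [0, ∑ d]`.
-/

theorem exists_weighted_quantile {ι α M : Type*} [LinearOrder α]
    [AddCommMonoid M] [LinearOrder M] {s : Finset ι} (hs : s.Nonempty) (r : ι → α) (w : ι → M)
    {c : M} (hc₀ : 0 ≤ c) (hc : c ≤ ∑ j ∈ s, w j) :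
    ∃ i ∈ s, ∑ j ∈ s with r i < r j, w j ≤ c ∧ c ≤ ∑ j ∈ s with r i ≤ r j, w j := by
  have candidates_nonempty : {i ∈ s | c ≤ ∑ j ∈ s with r i ≤ r j, w j}.Nonempty := by
    obtain ⟨k, hk, hmin⟩ := s.exists_min_image r hs
    exact ⟨k, mem_filter.2 ⟨hk, by rwa [filter_true_of_mem hmin]⟩⟩
  obtain ⟨i, hi, hmax⟩ := exists_max_image _ r candidates_nonempty
  obtain ⟨his, hic⟩ := mem_filter.1 hi
  refine ⟨i, his, ?_, hic⟩
  rcases {j ∈ s | r i < r j}.eq_empty_or_nonempty with hempty | habove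
  · rwa [hempty, sum_empty]
  · obtain ⟨k, hk, hmin⟩ := exists_min_image _ r habove
    obtain ⟨hks, hik⟩ := mem_filter.1 hk
    have above_i_eq : {j ∈ s | r i < r j} = {j ∈ s | r k ≤ r j} :=
      filter_congr fun j hj =>
        ⟨fun hij => hmin j (mem_filter.2 ⟨hj, hij⟩), fun hkj => hik.trans_le hkj⟩
    rw [above_i_eq]
    by_contra! hlt
    exact (hmax k (mem_filter.2 ⟨hks, hlt.le⟩)).not_gt hik

section HockeyStick

variable {ι R : Type*} [Fintype ι] [CommRing R] [LinearOrder R] [IsStrictOrderedRing R]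

/-- The hockey-stick divergence of `y` from `d` at level `t`, without any normalization or sign
condition on `y` and `d`. Its values at `t = y i / d i` are the sums in the definition of `th`. -/
def hockeyStick (d y : ι → R) (t : R) : R :=
  ∑ j, (y j - t * d j)⁺

theorem hockeyStick_eq_sum_filter_lt (d y : ι → R) (t : R) :
    hockeyStick d y t = ∑ j with t * d j < y j, y j - t * ∑ j with t * d j < y j, d j := by
  simp only [hockeyStick, posPart_eq_ite_lt, sub_pos, ← sum_filter, sum_sub_distrib, mul_sum]

theorem hockeyStick_eq_sum_filter_le (d y : ι → R) (t : R) :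
    hockeyStick d y t = ∑ j with t * d j ≤ y j, y j - t * ∑ j with t * d j ≤ y j, d j := by
  simp only [hockeyStick, posPart_eq_ite, sub_nonneg, ← sum_filter, sum_sub_distrib, mul_sum]

theorem sum_sub_mul_sum_le_hockeyStick (d y : ι → R) (t : R) (s : Finset ι) :
    ∑ j ∈ s, y j - t * ∑ j ∈ s, d j ≤ hockeyStick d y t := by
  rw [mul_sum, ← sum_sub_distrib]
  exact (sum_le_sum fun j _ => le_posPart _).trans
    (sum_le_univ_sum_of_nonneg fun j => posPart_nonneg _)

/-- The two hypotheses say that `-c` is a subgradient of `hockeyStick d y` at `t`. -/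
theorem hockeyStick_add_mul_le {d y : ι → R} {t c : R} (hlt : ∑ j with t * d j < y j, d j ≤ c)
    (hle : c ≤ ∑ j with t * d j ≤ y j, d j) (s : R) :
    hockeyStick d y t + t * c ≤ hockeyStick d y s + s * c := by
  rcases le_total t s with hts | hst
  · have := sum_sub_mul_sum_le_hockeyStick d y s {j | t * d j < y j}
    rw [hockeyStick_eq_sum_filter_lt d y t]
    linarith [mul_le_mul_of_nonneg_left hlt (sub_nonneg.2 hts)]
  · have := sum_sub_mul_sum_le_hockeyStick d y s {j | t * d j ≤ y j}
    rw [hockeyStick_eq_sum_filter_le d y t]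
    linarith [mul_le_mul_of_nonneg_left hle (sub_nonneg.2 hst)]

theorem hockeyStick_add_sum_filter_lt_le {d : ι → R} (hd : 0 ≤ d) (y : ι → R) (t s : R) :
    hockeyStick d y t + t * ∑ j with t * d j < y j, d j ≤
      hockeyStick d y s + s * ∑ j with t * d j < y j, d j :=
  hockeyStick_add_mul_le le_rfl
    (sum_le_sum_of_subset_of_nonneg (monotone_filter_right _ fun _ _ => le_of_lt)
      fun j _ _ => hd j) s

theorem sum_abs_sub_mul_eq (d y : ι → R) (t : R) :
    ∑ j, |y j - t * d j| = 2 * hockeyStick d y t - ∑ j, y j + t * ∑ j, d j := by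
  have abs_eq (a : R) : |a| = 2 * a⁺ - a := by
    linarith [posPart_add_negPart a, posPart_sub_negPart a]
  simp only [abs_eq, hockeyStick, sum_sub_distrib, mul_sum]
  ring

end HockeyStick

section Breakpoint

variable {ι K : Type*} [Fintype ι] [Field K] [LinearOrder K] [IsStrictOrderedRing K]

theorem sum_filter_pos_and_lt_div {d : ι → K} (hd : 0 ≤ d) (y : ι → K) (t : K) :
    ∑ j with 0 < d j ∧ t < y j / d j, d j = ∑ j with t * d j < y j, d j := by
  simp only [sum_filter]
  refine sum_congr rfl fun j _ => ?_
  obtain hj | (hj : 0 < d j) := (hd j).eq_or_lt'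
  · simp [hj]
  · simp only [hj, true_and, lt_div_iff₀ hj]

theorem sum_filter_pos_and_le_div {d : ι → K} (hd : 0 ≤ d) (y : ι → K) (t : K) :
    ∑ j with 0 < d j ∧ t ≤ y j / d j, d j = ∑ j with t * d j ≤ y j, d j := by
  simp only [sum_filter]
  refine sum_congr rfl fun j _ => ?_
  obtain hj | (hj : 0 < d j) := (hd j).eq_or_lt'
  · simp [hj]
  · simp only [hj, true_and, le_div_iff₀ hj]

theorem exists_div_forall_hockeyStick_add_mul_le {d : ι → K} (hd : 0 < d) (y : ι → K)
    {c : K} (hc : c ∈ Set.Icc 0 (∑ j, d j)) :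
    ∃ i, 0 < d i ∧ ∀ s,
      hockeyStick d y (y i / d i) + y i / d i * c ≤ hockeyStick d y s + s * c := by
  obtain ⟨hd₀, k, hk⟩ := Pi.lt_def.1 hd
  have sum_pos_eq : ∑ j with 0 < d j, d j = ∑ j, d j :=
    sum_filter_of_ne fun j _ hj => (hd₀ j).lt_of_ne' hj
  obtain ⟨i, hi, hlt, hle⟩ := exists_weighted_quantile
    ⟨k, mem_filter_univ k |>.2 hk⟩ (fun j => y j / d j) d hc.1 (hc.2.trans_eq sum_pos_eq.symm)
  rw [filter_filter, sum_filter_pos_and_lt_div hd₀] at hlt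
  rw [filter_filter, sum_filter_pos_and_le_div hd₀] at hle
  exact ⟨i, (mem_filter_univ i).1 hi, hockeyStick_add_mul_le hlt hle⟩

end Breakpoint

theorem isLeast_th {n : ℕ} {d : Fin n → ℝ} (hd : 0 < d) (y : Fin n → ℝ) {c : ℝ}
    (hc : c ∈ Set.Icc 0 (∑ i, d i)) :
    IsLeast (Set.range fun t => hockeyStick d y t + t * c) (th d y c) := by
  obtain ⟨i, hi, hmin⟩ := exists_div_forall_hockeyStick_add_mul_le hd y hc
  have th_eq : th d y c = hockeyStick d y (y i / d i) + y i / d i * c :=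
    IsLeast.csInf_eq ⟨⟨i, hi, rfl⟩, Set.forall_mem_image.2 fun k _ => hmin (y k / d k)⟩
  rw [th_eq]
  exact ⟨⟨y i / d i, rfl⟩, Set.forall_mem_range.2 hmin⟩

theorem th_le_th_iff_hockeyStick_le {n : ℕ} {d : Fin n → ℝ} (hd : 0 < d) (x y : Fin n → ℝ) :
    (∀ c ∈ Set.Icc 0 (∑ i, d i), th d x c ≤ th d y c) ↔
      ∀ t, hockeyStick d x t ≤ hockeyStick d y t := by
  constructor
  · intro hth t
    set c := ∑ j with t * d j < x j, d j
    have hc : c ∈ Set.Icc 0 (∑ i, d i) :=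
      ⟨sum_nonneg fun j _ => hd.le j, sum_le_univ_sum_of_nonneg hd.le⟩
    have hx : IsLeast (Set.range fun s => hockeyStick d x s + s * c) (hockeyStick d x t + t * c) :=
      ⟨⟨t, rfl⟩, Set.forall_mem_range.2 (hockeyStick_add_sum_filter_lt_le hd.le x t)⟩
    refine le_of_add_le_add_right (a := t * c) ?_
    calc
      hockeyStick d x t + t * c = th d x c := hx.unique (isLeast_th hd x hc)
      _ ≤ th d y c := hth c hc
      _ ≤ hockeyStick d y t + t * c := (isLeast_th hd y hc).2 ⟨t, rfl⟩
  · intro hH c hc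
    obtain ⟨t, ht⟩ := (isLeast_th hd y hc).1
    calc
      th d x c ≤ hockeyStick d x t + t * c := (isLeast_th hd x hc).2 ⟨t, rfl⟩
      _ ≤ hockeyStick d y t + t * c := add_le_add_left (hH t) _
      _ = th d y c := ht

/-- Thermomajorization-curve domination is equivalent to the 1-norm condition. -/
theorem stmt1 (n : ℕ) (hn : 1 ≤ n) (d : Fin n → ℝ) (hd : ∀ i, 0 ≤ d i)
    (hd0 : d ≠ 0) (x y : Fin n → ℝ) (hsum : ∑ i, x i = ∑ i, y i) :
    (∀ c ∈ Set.Icc (0 : ℝ) (∑ i, d i), th d x c ≤ th d y c) ↔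
      ∀ t : ℝ, ∑ i, |x i - t * d i| ≤ ∑ i, |y i - t * d i| := by
  have hdpos : 0 < d := lt_of_le_of_ne hd hd0.symm
  rw [th_le_th_iff_hockeyStick_le hdpos]
  refine forall_congr' fun t => ?_
  rw [sum_abs_sub_mul_eq, sum_abs_sub_mul_eq, hsum, add_le_add_iff_right, sub_le_sub_iff_right,
    mul_le_mul_iff_right₀ two_pos]
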